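/- For any nested expression F and any X5-interpretation ⟨H,T⟩: (i) H ⊨ F^T if and only if T ⊨ F and H ⊨ F^T₊, and (ii) H ⫤ F^T if and only if T ⫤ F and H ⫤ F^T₋. -/

import Mathlib

open scoped Classical

namespace X5Paper

/-- Explicit literals: an atom `p` or its explicit negation `∼p`. -/
inductive XLit (At : Type) : Type
  | pos : At → XLit At
  | neg : At → XLit At

/-- A set of explicit literals is consistent if it contains no atom together
with its explicit negation. -/
def Consistent {At : Type} (T : Set (XLit At)) : Prop :=
  ∀ p : At, ¬ (XLit.pos p ∈ T ∧ XLit.neg p ∈ T)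

/-- Nested expressions: ⊤, ⊥, atoms, ∧, ∨, default negation ¬, explicit negation ∼. -/
inductive NExp (At : Type) : Type
  | top : NExp At
  | bot : NExp At
  | atom : At → NExp At
  | conj : NExp At → NExp At → NExp At
  | disj : NExp At → NExp At → NExp At
  | dneg : NExp At → NExp At
  | xneg : NExp At → NExp At

variable {At : Type}

mutual
/-- Satisfaction `T ⊨ F` of a nested expression by a set of explicit literals. -/
def NExp.sat (T : Set (XLit At)) : NExp At → Prop
  | .top => True
  | .bot => False
  | .atom p => XLit.pos p ∈ T
  | .conj F G => NExp.sat T F ∧ NExp.sat T G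
  | .disj F G => NExp.sat T F ∨ NExp.sat T G
  | .dneg F => ¬ NExp.sat T F
  | .xneg F => NExp.fals T F

/-- Falsification `T ⫤ F` of a nested expression by a set of explicit literals. -/
def NExp.fals (T : Set (XLit At)) : NExp At → Prop
  | .top => False
  | .bot => True
  | .atom p => XLit.neg p ∈ T
  | .conj F G => NExp.fals T F ∨ NExp.fals T G
  | .disj F G => NExp.fals T F ∧ NExp.fals T G
  | .dneg F => NExp.sat T F
  | .xneg F => NExp.sat T F
end

/-- The reduct `F^T` of a nested expression. -/
noncomputable def NExp.reduct (T : Set (XLit At)) : NExp At → NExp At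
  | .top => .top
  | .bot => .bot
  | .atom p => .atom p
  | .conj F G => .conj (NExp.reduct T F) (NExp.reduct T G)
  | .disj F G => .disj (NExp.reduct T F) (NExp.reduct T G)
  | .dneg F => if NExp.sat T F then .bot else .top
  | .xneg F => .xneg (NExp.reduct T F)

/-- Formulas: atoms, ⊥, ∧, ∨, →, explicit negation ∼. -/
inductive Frm (At : Type) : Type
  | atom : At → Frm At
  | bot : Frm At
  | conj : Frm At → Frm At → Frm At
  | disj : Frm At → Frm At → Frm At
  | impl : Frm At → Frm At → Frm At
  | xneg : Frm At → Frm At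

/-- Default negation `¬φ := φ → ⊥`. -/
def Frm.neg (φ : Frm At) : Frm At := Frm.impl φ Frm.bot

/-- `⊤ := ¬⊥`. -/
def Frm.top : Frm At := Frm.neg Frm.bot

/-- Weak equivalence `φ ↔ ψ := (φ→ψ) ∧ (ψ→φ)`. -/
def Frm.iff (φ ψ : Frm At) : Frm At := Frm.conj (Frm.impl φ ψ) (Frm.impl ψ φ)

/-- Strong equivalence connective `φ ⇔ ψ := (φ↔ψ) ∧ (∼φ↔∼ψ)`. -/
def Frm.siff (φ ψ : Frm At) : Frm At :=
  Frm.conj (Frm.iff φ ψ) (Frm.iff (Frm.xneg φ) (Frm.xneg ψ))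

mutual
/-- X5 satisfaction `⟨H,T⟩ ⊨ φ`. -/
def Sat : Set (XLit At) → Set (XLit At) → Frm At → Prop
  | H, _, .atom p => XLit.pos p ∈ H
  | _, _, .bot => False
  | H, T, .conj φ ψ => Sat H T φ ∧ Sat H T ψ
  | H, T, .disj φ ψ => Sat H T φ ∨ Sat H T ψ
  | H, T, .impl φ ψ => (Sat H T φ → Sat H T ψ) ∧ (Sat T T φ → Sat T T ψ)
  | H, T, .xneg φ => Fals H T φ

/-- X5 falsification `⟨H,T⟩ ⫤ φ`. -/
def Fals : Set (XLit At) → Set (XLit At) → Frm At → Prop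
  | H, _, .atom p => XLit.neg p ∈ H
  | _, _, .bot => True
  | H, T, .conj φ ψ => Fals H T φ ∨ Fals H T ψ
  | H, T, .disj φ ψ => Fals H T φ ∧ Fals H T ψ
  | H, T, .impl φ ψ => Sat T T φ ∧ Fals H T ψ
  | H, T, .xneg φ => Sat H T φ
end

/-- X5 validity: satisfied by every X5-interpretation `⟨H,T⟩`. -/
def X5Valid (φ : Frm At) : Prop :=
  ∀ H T : Set (XLit At), Consistent H → Consistent T → H ⊆ T → Sat H T φ

/-- Nested expressions viewed as formulas (`¬F := F → ⊥`, `⊤ := ¬⊥`). -/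
def NExp.toFrm : NExp At → Frm At
  | .top => Frm.top
  | .bot => .bot
  | .atom p => .atom p
  | .conj F G => .conj F.toFrm G.toFrm
  | .disj F G => .disj F.toFrm G.toFrm
  | .dneg F => Frm.neg F.toFrm
  | .xneg F => .xneg F.toFrm

/-- Uniform substitution `φ[α/p]`. -/
noncomputable def Frm.subst (p : At) (α : Frm At) : Frm At → Frm At
  | .atom q => if q = p then α else .atom q
  | .bot => .bot
  | .conj φ ψ => .conj (Frm.subst p α φ) (Frm.subst p α ψ)
  | .disj φ ψ => .disj (Frm.subst p α φ) (Frm.subst p α ψ)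
  | .impl φ ψ => .impl (Frm.subst p α φ) (Frm.subst p α ψ)
  | .xneg φ => .xneg (Frm.subst p α φ)

/-- A formula contains no explicit negation. -/
def NoXneg : Frm At → Prop
  | .atom _ => True
  | .bot => True
  | .conj φ ψ => NoXneg φ ∧ NoXneg ψ
  | .disj φ ψ => NoXneg φ ∧ NoXneg ψ
  | .impl φ ψ => NoXneg φ ∧ NoXneg ψ
  | .xneg _ => False

/-- HT satisfaction for (∼-free) formulas; the `∼` clause is a dummy. -/
def HTSat : Set At → Set At → Frm At → Prop
  | H, _, .atom p => p ∈ H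
  | _, _, .bot => False
  | H, T, .conj φ ψ => HTSat H T φ ∧ HTSat H T ψ
  | H, T, .disj φ ψ => HTSat H T φ ∨ HTSat H T ψ
  | H, T, .impl φ ψ => (HTSat H T φ → HTSat H T ψ) ∧ (HTSat T T φ → HTSat T T ψ)
  | _, _, .xneg _ => False

/-- HT validity for ∼-free formulas. -/
def HTValid (φ : Frm At) : Prop :=
  ∀ H T : Set At, H ⊆ T → HTSat H T φ

/-- Atom `p` occurs in a formula. -/
def Frm.occurs (p : At) : Frm At → Prop
  | .atom q => q = p
  | .bot => False
  | .conj φ ψ => Frm.occurs p φ ∨ Frm.occurs p ψ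
  | .disj φ ψ => Frm.occurs p φ ∨ Frm.occurs p ψ
  | .impl φ ψ => Frm.occurs p φ ∨ Frm.occurs p ψ
  | .xneg φ => Frm.occurs p φ

/-- Atom `p` occurs only outside the scope of explicit negation `∼`. -/
def OutsideXneg (p : At) : Frm At → Prop
  | .atom _ => True
  | .bot => True
  | .conj φ ψ => OutsideXneg p φ ∧ OutsideXneg p ψ
  | .disj φ ψ => OutsideXneg p φ ∧ OutsideXneg p ψ
  | .impl φ ψ => OutsideXneg p φ ∧ OutsideXneg p ψ
  | .xneg φ => ¬ Frm.occurs p φ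

/-- A rule `F → G` of a program. -/
abbrev Rule (At : Type) := NExp At × NExp At

/-- `T` is a model of a program: it satisfies the head whenever it satisfies the body. -/
def NModels (T : Set (XLit At)) (Prog : Set (Rule At)) : Prop :=
  ∀ r ∈ Prog, NExp.sat T r.1 → NExp.sat T r.2

/-- The reduct `Π^T` of a program. -/
noncomputable def progReduct (T : Set (XLit At)) (Prog : Set (Rule At)) : Set (Rule At) :=
  (fun r : Rule At => (NExp.reduct T r.1, NExp.reduct T r.2)) '' Prog

/-- `T` is an answer set of `Π`: a ⊆-minimal (consistent) model of the reduct `Π^T`. -/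
def AnswerSet (Prog : Set (Rule At)) (T : Set (XLit At)) : Prop :=
  Consistent T ∧ NModels T (progReduct T Prog) ∧
    ∀ T' : Set (XLit At), Consistent T' → T' ⊆ T → NModels T' (progReduct T Prog) → T' = T

/-- The theory corresponding to a program: each rule `F → G` read as an implication. -/
def ruleTheory (Prog : Set (Rule At)) : Set (Frm At) :=
  (fun r : Rule At => Frm.impl r.1.toFrm r.2.toFrm) '' Prog

/-- `⟨T,T⟩` is an equilibrium model of the theory `Γ`. -/
def EqModel (Γ : Set (Frm At)) (T : Set (XLit At)) : Prop :=
  Consistent T ∧ (∀ φ ∈ Γ, Sat T T φ) ∧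
    ¬ ∃ H : Set (XLit At), Consistent H ∧ H ⊂ T ∧ ∀ φ ∈ Γ, Sat H T φ

mutual
/-- Generalized Ferraris reduct `φ^T₊` of a formula (a nested expression). -/
noncomputable def redPos (T : Set (XLit At)) : Frm At → NExp At
  | .atom p => if XLit.pos p ∈ T then .atom p else .bot
  | .bot => .bot
  | .conj α β => if Sat T T (Frm.conj α β) then .conj (redPos T α) (redPos T β) else .bot
  | .disj α β => if Sat T T (Frm.disj α β) then .disj (redPos T α) (redPos T β) else .bot
  | .impl α β => if Sat T T (Frm.impl α β) then .disj (.dneg (redPos T α)) (redPos T β) else .bot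
  | .xneg α => if Sat T T (Frm.xneg α) then .xneg (redNeg T α) else .bot

/-- Generalized Ferraris reduct `φ^T₋` of a formula (a nested expression). -/
noncomputable def redNeg (T : Set (XLit At)) : Frm At → NExp At
  | .atom p => if XLit.neg p ∈ T then .atom p else .top
  | .bot => .bot
  | .conj α β => if Fals T T (Frm.conj α β) then .conj (redNeg T α) (redNeg T β) else .top
  | .disj α β => if Fals T T (Frm.disj α β) then .disj (redNeg T α) (redNeg T β) else .top
  | .impl α β => if Fals T T (Frm.impl α β) then redNeg T β else .top
  | .xneg α => if Fals T T (Frm.xneg α) then .xneg (redPos T α) else .top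
end

mutual
/-- Generalized Ferraris reduct `F^T₊` of a nested expression. -/
noncomputable def nRedPos (T : Set (XLit At)) : NExp At → NExp At
  | .top => .top
  | .bot => .bot
  | .atom p => if XLit.pos p ∈ T then .atom p else .bot
  | .conj α β => if NExp.sat T (NExp.conj α β) then .conj (nRedPos T α) (nRedPos T β) else .bot
  | .disj α β => if NExp.sat T (NExp.disj α β) then .disj (nRedPos T α) (nRedPos T β) else .bot
  | .dneg α => if NExp.sat T (NExp.dneg α) then .dneg (nRedPos T α) else .bot
  | .xneg α => if NExp.sat T (NExp.xneg α) then .xneg (nRedNeg T α) else .bot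

/-- Generalized Ferraris reduct `F^T₋` of a nested expression. -/
noncomputable def nRedNeg (T : Set (XLit At)) : NExp At → NExp At
  | .top => .top
  | .bot => .bot
  | .atom p => if XLit.neg p ∈ T then .atom p else .top
  | .conj α β => if NExp.fals T (NExp.conj α β) then .conj (nRedNeg T α) (nRedNeg T β) else .top
  | .disj α β => if NExp.fals T (NExp.disj α β) then .disj (nRedNeg T α) (nRedNeg T β) else .top
  | .dneg α => if NExp.fals T (NExp.dneg α) then .bot else .top
  | .xneg α => if NExp.fals T (NExp.xneg α) then .xneg (nRedPos T α) else .top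
end

/-- The five-valued valuation `M(φ)` of `M = ⟨H,T⟩`. -/
noncomputable def val (H T : Set (XLit At)) : Frm At → ℤ
  | .atom p =>
      if XLit.pos p ∈ H then 2
      else if XLit.neg p ∈ H then -2
      else if XLit.pos p ∈ T then 1
      else if XLit.neg p ∈ T then -1
      else 0
  | .bot => -2
  | .conj φ ψ => min (val H T φ) (val H T ψ)
  | .disj φ ψ => max (val H T φ) (val H T ψ)
  | .impl φ ψ => if val H T φ ≤ max (val H T ψ) 0 then 2 else val H T ψ
  | .xneg φ => - val H T φ


/-! The guard in `F^T₊` yields `⊥` when `T ⊭ F`, so `H ⊨ F^T₊` already forces `T ⊨ F`, for any `H`.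
Hence at `∧`, `∨` and `∼` the guard is implied by what it guards and may be dropped, while at `¬F`
the guard `T ⊭ F` gives `H ⊭ F^T₊` and decides the value alone. So satisfaction of `F^T₊` obeys the
same recursive clauses as that of `F^T`; the two can differ only at literals outside `T`, which
`H ⊆ T` rules out. The argument for falsification and `F^T₋` is dual. -/

namespace NExp

variable {H T : Set (XLit At)} {F G : NExp At} {c : Prop} {p : At}

theorem sat_ite_bot [Decidable c] : sat H (if c then F else bot) ↔ c ∧ sat H F := by
  by_cases hc : c <;> simp [hc, sat]

theorem fals_ite_top [Decidable c] : fals H (if c then F else top) ↔ c ∧ fals H F := by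
  by_cases hc : c <;> simp [hc, fals]

theorem sat_of_sat_nRedPos (h : sat H (nRedPos T F)) : sat T F := by
  cases F with
  | top => trivial
  | bot => exact h
  | atom | conj | disj | dneg | xneg => exact (sat_ite_bot.mp h).1

theorem fals_of_fals_nRedNeg (h : fals H (nRedNeg T F)) : fals T F := by
  cases F with
  | top => exact h
  | bot => trivial
  | atom | conj | disj | dneg | xneg => exact (fals_ite_top.mp h).1

theorem sat_nRedPos_atom (hHT : H ⊆ T) : sat H (nRedPos T (atom p)) ↔ XLit.pos p ∈ H :=
  sat_ite_bot.trans (and_iff_right_of_imp (@hHT _))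

theorem fals_nRedNeg_atom (hHT : H ⊆ T) : fals H (nRedNeg T (atom p)) ↔ XLit.neg p ∈ H :=
  fals_ite_top.trans (and_iff_right_of_imp (@hHT _))

theorem sat_nRedPos_conj :
    sat H (nRedPos T (conj F G)) ↔ sat H (nRedPos T F) ∧ sat H (nRedPos T G) :=
  sat_ite_bot.trans (and_iff_right_of_imp (And.imp sat_of_sat_nRedPos sat_of_sat_nRedPos))

theorem fals_nRedNeg_conj :
    fals H (nRedNeg T (conj F G)) ↔ fals H (nRedNeg T F) ∨ fals H (nRedNeg T G) :=
  fals_ite_top.trans (and_iff_right_of_imp (Or.imp fals_of_fals_nRedNeg fals_of_fals_nRedNeg))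

theorem sat_nRedPos_disj :
    sat H (nRedPos T (disj F G)) ↔ sat H (nRedPos T F) ∨ sat H (nRedPos T G) :=
  sat_ite_bot.trans (and_iff_right_of_imp (Or.imp sat_of_sat_nRedPos sat_of_sat_nRedPos))

theorem fals_nRedNeg_disj :
    fals H (nRedNeg T (disj F G)) ↔ fals H (nRedNeg T F) ∧ fals H (nRedNeg T G) :=
  fals_ite_top.trans (and_iff_right_of_imp (And.imp fals_of_fals_nRedNeg fals_of_fals_nRedNeg))

theorem sat_nRedPos_dneg : sat H (nRedPos T (dneg F)) ↔ ¬ sat T F :=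
  sat_ite_bot.trans (and_iff_left_of_imp (mt sat_of_sat_nRedPos))

theorem fals_nRedNeg_dneg : fals H (nRedNeg T (dneg F)) ↔ sat T F :=
  fals_ite_top.trans (and_iff_left trivial)

theorem sat_nRedPos_xneg : sat H (nRedPos T (xneg F)) ↔ fals H (nRedNeg T F) :=
  sat_ite_bot.trans (and_iff_right_of_imp fals_of_fals_nRedNeg)

theorem fals_nRedNeg_xneg : fals H (nRedNeg T (xneg F)) ↔ sat H (nRedPos T F) :=
  fals_ite_top.trans (and_iff_right_of_imp sat_of_sat_nRedPos)

theorem sat_reduct_dneg : sat H (reduct T (dneg F)) ↔ ¬ sat T F := by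
  by_cases hF : sat T F <;> simp [reduct, sat, hF]

theorem fals_reduct_dneg : fals H (reduct T (dneg F)) ↔ sat T F := by
  by_cases hF : sat T F <;> simp [reduct, fals, hF]

mutual

theorem sat_nRedPos_iff_sat_reduct (hHT : H ⊆ T) :
    ∀ F : NExp At, sat H (nRedPos T F) ↔ sat H (reduct T F)
  | top => Iff.rfl
  | bot => Iff.rfl
  | atom _ => sat_nRedPos_atom hHT
  | conj F G => sat_nRedPos_conj.trans
      (and_congr (sat_nRedPos_iff_sat_reduct hHT F) (sat_nRedPos_iff_sat_reduct hHT G))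
  | disj F G => sat_nRedPos_disj.trans
      (or_congr (sat_nRedPos_iff_sat_reduct hHT F) (sat_nRedPos_iff_sat_reduct hHT G))
  | dneg _ => sat_nRedPos_dneg.trans sat_reduct_dneg.symm
  | xneg F => sat_nRedPos_xneg.trans (fals_nRedNeg_iff_fals_reduct hHT F)

theorem fals_nRedNeg_iff_fals_reduct (hHT : H ⊆ T) :
    ∀ F : NExp At, fals H (nRedNeg T F) ↔ fals H (reduct T F)
  | top => Iff.rfl
  | bot => Iff.rfl
  | atom _ => fals_nRedNeg_atom hHT
  | conj F G => fals_nRedNeg_conj.trans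
      (or_congr (fals_nRedNeg_iff_fals_reduct hHT F) (fals_nRedNeg_iff_fals_reduct hHT G))
  | disj F G => fals_nRedNeg_disj.trans
      (and_congr (fals_nRedNeg_iff_fals_reduct hHT F) (fals_nRedNeg_iff_fals_reduct hHT G))
  | dneg _ => fals_nRedNeg_dneg.trans fals_reduct_dneg.symm
  | xneg F => fals_nRedNeg_xneg.trans (sat_nRedPos_iff_sat_reduct hHT F)

end

end NExp

theorem stmt9_general {H T : Set (XLit At)} (hsub : H ⊆ T) (F : NExp At) :
    (NExp.sat H (NExp.reduct T F) ↔ (NExp.sat T F ∧ NExp.sat H (nRedPos T F))) ∧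
    (NExp.fals H (NExp.reduct T F) ↔ (NExp.fals T F ∧ NExp.fals H (nRedNeg T F))) := by
  rw [← NExp.sat_nRedPos_iff_sat_reduct hsub, ← NExp.fals_nRedNeg_iff_fals_reduct hsub]
  exact ⟨(and_iff_right_of_imp NExp.sat_of_sat_nRedPos).symm,
    (and_iff_right_of_imp NExp.fals_of_fals_nRedNeg).symm⟩

/-- for any nested expression `F` and X5-interpretation `⟨H,T⟩`:
(i) `H ⊨ F^T` iff `T ⊨ F` and `H ⊨ F^T₊`;
(ii) `H ⫤ F^T` iff `T ⫤ F` and `H ⫤ F^T₋`. -/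
theorem stmt9 (At : Type) (H T : Set (XLit At))
    (hH : Consistent H) (hT : Consistent T) (hsub : H ⊆ T) (F : NExp At) :
    (NExp.sat H (NExp.reduct T F) ↔ (NExp.sat T F ∧ NExp.sat H (nRedPos T F))) ∧
    (NExp.fals H (NExp.reduct T F) ↔ (NExp.fals T F ∧ NExp.fals H (nRedNeg T F))) :=
  stmt9_general hsub F

end X5Paper
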